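/- Fix integers n and t with 2 ≤ t < n. Let C ⊆ ℤ/nℤ be a t-sparse set, let A ⊆ {c + t : c ∈ C}, and let W = (⋃_{c ∈ C} F(c)) ∪ A. Then |Ind(W)| = |C| + |{a ∈ A : a + 1 ∉ C}| + t·|{a ∈ A : a + 1 ∈ C}|. -/

import Mathlib

/-- The facet `F(i) = {i, i+1, …, i+t-1}` of the path complex `Δ_t(C_n)`
with standard labeling, vertices identified with `ℤ/nℤ`. -/
def facet (n t : ℕ) (i : ZMod n) : Finset (ZMod n) :=
  (Finset.range t).image (fun r : ℕ => i + (r : ZMod n))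

/-- A subset `C` of `ℤ/nℤ` is `t`-sparse if for every `c ∈ C` and every `1 ≤ k ≤ t`
one has `c + k ∉ C`. -/
def TSparse (n t : ℕ) (C : Finset (ZMod n)) : Prop :=
  ∀ c ∈ C, ∀ k : ℕ, 1 ≤ k → k ≤ t → c + (k : ZMod n) ∉ C

/-- `Ind(W) = {j : F(j) ⊆ W}`, the index set of the induced subcollection of
`Δ_t(C_n)` on the vertex set `W`. -/
def indSet (n t : ℕ) (W : Finset (ZMod n)) : Set (ZMod n) :=
  {j | facet n t j ⊆ W}

/-!
Write `U = ⋃_{c ∈ C} F(c)`. By sparsity the representation `c + r` with `c ∈ C`, `r ≤ t` is unique.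
Hence `c + t ∉ U`, and since `F(c + r)` contains `c + t` for `0 < r ≤ t`, it follows that
`Ind(U) = C`. Now add the vertices of `A` to `U` one at a time. The indices gained with `a = c + t`
belong to facets through `a`, so they are among `c + 1, …, c + t`. If `a + 1 ∈ C`, all these `t`
facets lie in `F(c) ∪ {a} ∪ F(a + 1)`, so all are gained. If `a + 1 ∉ C`, then `a + 1` is not a
vertex of `U ∪ A`, so only the facet `F(c + 1)`, which ends at `a`, is gained.
-/

/-- The star of the vertex `a`: the set of indices of the facets that contain `a`. These are the
facets that can enter the induced subcollection when `a` is added to the vertex set. -/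
def starIndSet (n t : ℕ) (a : ZMod n) : Set (ZMod n) :=
  {j | a ∈ facet n t j}

section

variable {n t : ℕ} {C A W : Finset (ZMod n)} {a c d i x : ZMod n}

theorem mem_facet : x ∈ facet n t i ↔ ∃ r < t, i + (r : ZMod n) = x := by
  simp only [facet, Finset.mem_image, Finset.mem_range]

theorem facet_subset_iff : facet n t i ⊆ W ↔ ∀ r < t, i + (r : ZMod n) ∈ W := by
  simp only [facet, Finset.image_subset_iff, Finset.mem_range]

theorem self_mem_facet (ht : 0 < t) : i ∈ facet n t i :=
  mem_facet.2 ⟨0, ht, by simp⟩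

theorem indSet_subset (ht : 0 < t) : indSet n t W ⊆ W :=
  fun _ hj => hj (self_mem_facet ht)

theorem starIndSet_add_eq_image :
    starIndSet n t (c + (t : ZMod n)) = (fun r : ℕ => c + (r : ZMod n)) '' Set.Icc 1 t := by
  ext j
  simp only [starIndSet, Set.mem_ofPred_eq, mem_facet, Set.mem_image, Set.mem_Icc]
  constructor
  · rintro ⟨s, hs, hj⟩
    refine ⟨t - s, ⟨by omega, by omega⟩, ?_⟩
    rw [Nat.cast_sub hs.le]
    linear_combination -hj
  · rintro ⟨r, ⟨hr₁, hr⟩, rfl⟩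
    refine ⟨t - r, by omega, ?_⟩
    rw [Nat.cast_sub hr]
    ring

theorem facet_add_one_subset : facet n t (c + 1) ⊆ insert (c + (t : ZMod n)) (facet n t c) := by
  refine facet_subset_iff.2 fun k hk => ?_
  have hx : c + 1 + (k : ZMod n) = c + ((k + 1 : ℕ) : ZMod n) := by push_cast; ring
  rw [hx]
  obtain hlt | rfl := (Nat.succ_le_of_lt hk).lt_or_eq
  · exact Finset.mem_insert_of_mem (mem_facet.2 ⟨k + 1, hlt, rfl⟩)
  · exact Finset.mem_insert_self _ _

theorem facet_add_subset {r : ℕ} (hr : r ≤ t) :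
    facet n t (c + (r : ZMod n)) ⊆
      insert (c + (t : ZMod n)) (facet n t c ∪ facet n t (c + (t : ZMod n) + 1)) := by
  refine facet_subset_iff.2 fun k hk => ?_
  rw [add_assoc c (r : ZMod n), ← Nat.cast_add, Finset.mem_insert, Finset.mem_union]
  obtain hlt | heq | hgt := lt_trichotomy (r + k) t
  · exact .inr (.inl (mem_facet.2 ⟨r + k, hlt, rfl⟩))
  · exact .inl (by rw [heq])
  · refine .inr (.inr (mem_facet.2 ⟨r + k - (t + 1), by omega, ?_⟩))
    rw [Nat.cast_sub hgt]
    push_cast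
    ring

theorem ncard_indSet_insert (ht : 0 < t) (ha : a ∉ W) :
    (indSet n t (insert a W)).ncard
      = (indSet n t W).ncard + (indSet n t (insert a W) ∩ starIndSet n t a).ncard := by
  have hsdiff : indSet n t (insert a W) \ starIndSet n t a = indSet n t W := by
    ext j
    simp only [indSet, starIndSet, Set.mem_sdiff, Set.mem_ofPred_eq]
    constructor
    · rintro ⟨hj, haj⟩
      exact (Finset.subset_insert_iff_of_notMem haj).1 hj
    · exact fun hj => ⟨hj.trans (Finset.subset_insert a W), fun haj => ha (hj haj)⟩
  have hfin : (indSet n t (insert a W)).Finite :=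
    (Finset.finite_toSet _).subset (indSet_subset ht)
  rw [← Set.ncard_inter_add_ncard_sdiff_eq_ncard _ (starIndSet n t a) hfin, hsdiff, add_comm]

theorem starIndSet_add_subset_indSet (hc : c ∈ C) (hcA : c + (t : ZMod n) ∈ A)
    (hnext : c + (t : ZMod n) + 1 ∈ C) :
    starIndSet n t (c + (t : ZMod n)) ⊆ indSet n t (C.biUnion (facet n t) ∪ A) := by
  rw [starIndSet_add_eq_image]
  rintro _ ⟨r, ⟨-, hr⟩, rfl⟩
  refine (facet_add_subset hr).trans (Finset.insert_subset (Finset.mem_union_right _ hcA) ?_)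
  exact (Finset.union_subset (Finset.subset_biUnion_of_mem _ hc)
    (Finset.subset_biUnion_of_mem _ hnext)).trans Finset.subset_union_left

theorem exists_add_eq_of_mem_biUnion_facet_union (hA : A ⊆ C.image (fun c => c + (t : ZMod n)))
    (hx : x ∈ C.biUnion (facet n t) ∪ A) : ∃ c ∈ C, ∃ r ≤ t, c + (r : ZMod n) = x := by
  obtain hx | hx := Finset.mem_union.1 hx
  · obtain ⟨c, hc, hxc⟩ := Finset.mem_biUnion.1 hx
    obtain ⟨r, hr, rfl⟩ := mem_facet.1 hxc
    exact ⟨c, hc, r, hr.le, rfl⟩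
  · obtain ⟨c, hc, rfl⟩ := Finset.mem_image.1 (hA hx)
    exact ⟨c, hc, t, le_rfl, rfl⟩

namespace TSparse

theorem eq_of_add_eq (hC : TSparse n t C) (hc : c ∈ C) (hd : d ∈ C) {r s : ℕ} (hr : r ≤ t)
    (hs : s ≤ t) (h : c + (r : ZMod n) = d + (s : ZMod n)) : r = s := by
  wlog hrs : r ≤ s generalizing c d r s
  · exact (this hd hc hs hr h.symm (le_of_not_ge hrs)).symm
  by_contra hne
  have hcd : c = d + ((s - r : ℕ) : ZMod n) := by
    rw [Nat.cast_sub hrs]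
    linear_combination h
  exact hC d hd (s - r) (by omega) (by omega) (hcd ▸ hc)

theorem add_notMem_biUnion_facet (hC : TSparse n t C) (hc : c ∈ C) :
    c + (t : ZMod n) ∉ C.biUnion (facet n t) := by
  intro hmem
  obtain ⟨d, hd, hcd⟩ := Finset.mem_biUnion.1 hmem
  obtain ⟨s, hs, h⟩ := mem_facet.1 hcd
  exact hs.ne (hC.eq_of_add_eq hd hc hs.le le_rfl h)

theorem indSet_biUnion_facet (hC : TSparse n t C) (ht : 0 < t) :
    indSet n t (C.biUnion (facet n t)) = C := by
  refine Set.Subset.antisymm (fun j hj => ?_) fun c hc => Finset.subset_biUnion_of_mem _ hc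
  obtain ⟨c, hc, hjc⟩ := Finset.mem_biUnion.1 (indSet_subset ht hj)
  obtain ⟨r, hr, rfl⟩ := mem_facet.1 hjc
  obtain rfl | hpos := r.eq_zero_or_pos
  · simpa using hc
  · have hstar : c + (r : ZMod n) ∈ starIndSet n t (c + (t : ZMod n)) := by
      rw [starIndSet_add_eq_image]
      exact ⟨r, ⟨hpos, hr.le⟩, rfl⟩
    exact absurd (hj hstar) (hC.add_notMem_biUnion_facet hc)

theorem add_add_one_mem (hC : TSparse n t C) (hA : A ⊆ C.image (fun c => c + (t : ZMod n)))
    (hc : c ∈ C) (h : c + (t : ZMod n) + 1 ∈ C.biUnion (facet n t) ∪ A) :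
    c + (t : ZMod n) + 1 ∈ C := by
  obtain ⟨d, hd, s, hs, hds⟩ := exists_add_eq_of_mem_biUnion_facet_union hA h
  obtain _ | s := s
  · simpa [← hds] using hd
  · have hpred : d + (s : ZMod n) = c + (t : ZMod n) := by
      push_cast at hds
      linear_combination hds
    exact absurd (hC.eq_of_add_eq hd hc (by omega) le_rfl hpred) (by omega)

theorem ncard_starIndSet_add (hC : TSparse n t C) (hc : c ∈ C) :
    (starIndSet n t (c + (t : ZMod n))).ncard = t := by
  have hinj : Set.InjOn (fun r : ℕ => c + (r : ZMod n)) (Set.Icc 1 t) :=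
    fun _ hr _ hs h => hC.eq_of_add_eq hc hc hr.2 hs.2 h
  rw [starIndSet_add_eq_image, hinj.ncard_image, Set.ncard_eq_toFinset_card']
  simp

theorem indSet_inter_starIndSet_add (hC : TSparse n t C) (ht : 0 < t)
    (hA : A ⊆ C.image (fun c => c + (t : ZMod n))) (hc : c ∈ C) (hcA : c + (t : ZMod n) ∈ A)
    (hnext : c + (t : ZMod n) + 1 ∉ C) :
    indSet n t (C.biUnion (facet n t) ∪ A) ∩ starIndSet n t (c + (t : ZMod n)) = {c + 1} := by
  rw [starIndSet_add_eq_image]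
  refine Set.Subset.antisymm ?_ (Set.singleton_subset_iff.2 ⟨?_, 1, ⟨le_rfl, ht⟩, by simp⟩)
  · rintro _ ⟨hj, r, ⟨hr₁, hr⟩, rfl⟩
    obtain rfl | hr₂ := hr₁.eq_or_lt
    · simp
    · have hmem : c + (t : ZMod n) + 1 ∈ C.biUnion (facet n t) ∪ A := by
        convert facet_subset_iff.1 hj (t + 1 - r) (by omega) using 1
        rw [Nat.cast_sub (by omega)]
        push_cast
        ring
      exact absurd (hC.add_add_one_mem hA hc hmem) hnext
  · exact facet_add_one_subset.trans (Finset.insert_subset (Finset.mem_union_right _ hcA)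
      ((Finset.subset_biUnion_of_mem _ hc).trans Finset.subset_union_left))

theorem ncard_indSet_union_insert (hC : TSparse n t C) (ht : 0 < t)
    (hA : insert a A ⊆ C.image (fun c => c + (t : ZMod n))) (ha : a ∉ A) :
    (indSet n t (C.biUnion (facet n t) ∪ insert a A)).ncard
      = (indSet n t (C.biUnion (facet n t) ∪ A)).ncard + if a + 1 ∈ C then t else 1 := by
  obtain ⟨c, hc, rfl⟩ := Finset.mem_image.1 (hA (Finset.mem_insert_self _ _))
  have hcA : c + (t : ZMod n) ∈ insert (c + (t : ZMod n)) A := Finset.mem_insert_self _ _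
  have hnotMem : c + (t : ZMod n) ∉ C.biUnion (facet n t) ∪ A :=
    Finset.notMem_union.2 ⟨hC.add_notMem_biUnion_facet hc, ha⟩
  rw [Finset.union_insert, ncard_indSet_insert ht hnotMem, ← Finset.union_insert]
  congr 1
  split_ifs with hnext
  · rw [Set.inter_eq_right.2 (starIndSet_add_subset_indSet hc hcA hnext),
      hC.ncard_starIndSet_add hc]
  · rw [hC.indSet_inter_starIndSet_add ht hA hc hcA hnext, Set.ncard_singleton]

theorem ncard_indSet_union (hC : TSparse n t C) (ht : 0 < t)
    (hA : A ⊆ C.image (fun c => c + (t : ZMod n))) :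
    (indSet n t (C.biUnion (facet n t) ∪ A)).ncard
      = C.card + ∑ a ∈ A, if a + 1 ∈ C then t else 1 := by
  induction A using Finset.induction_on with
  | empty =>
    rw [Finset.union_empty, hC.indSet_biUnion_facet ht, Set.ncard_coe_finset, Finset.sum_empty,
      add_zero]
  | insert a A ha ih =>
    rw [hC.ncard_indSet_union_insert ht hA ha, ih ((Finset.subset_insert a A).trans hA),
      Finset.sum_insert ha, add_assoc, add_comm (∑ a ∈ A, _)]

end TSparse

end

/-- For `n = 0` this counts facets of the path complex of the two-way infinite path on `ℤ`. -/
theorem stmt_7_general (n t : ℕ) (ht : 0 < t) (C A : Finset (ZMod n)) (hC : TSparse n t C)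
    (hA : A ⊆ C.image (fun c => c + (t : ZMod n))) :
    (indSet n t (C.biUnion (facet n t) ∪ A)).ncard
      = C.card + (A.filter (fun a => a + 1 ∉ C)).card
          + t * (A.filter (fun a => a + 1 ∈ C)).card := by
  rw [hC.ncard_indSet_union ht hA, Finset.sum_ite, Finset.sum_const, Finset.sum_const,
    smul_eq_mul, smul_eq_mul]
  ring

/-- Iterated form of Lemma 4.5 (used in Proposition 4.8): for a `t`-sparse set `C`,
`A ⊆ {c + t : c ∈ C}` and `W = (⋃_{c ∈ C} F(c)) ∪ A`, one has
`|Ind(W)| = |C| + |{a ∈ A : a + 1 ∉ C}| + t·|{a ∈ A : a + 1 ∈ C}|`. -/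
theorem stmt_7 (n t : ℕ) (ht : 2 ≤ t) (htn : t < n)
    (C A : Finset (ZMod n)) (hC : TSparse n t C)
    (hA : A ⊆ C.image (fun c => c + (t : ZMod n))) :
    (indSet n t (C.biUnion (facet n t) ∪ A)).ncard
      = C.card + (A.filter (fun a => a + 1 ∉ C)).card
          + t * (A.filter (fun a => a + 1 ∈ C)).card :=
  stmt_7_general n t (Nat.zero_lt_of_lt ht) C A hC hA
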